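/- Assume (Σ_n, T, (φ_n)) satisfies property (H*) with Hölder parameter r. Then for every k ∈ ℕ₀, with l_k := n_k + m_{k+n_k}, and all Borel probability measures μ_{k+l_k}, ν_{k+l_k} on Σ_{k+l_k}, one has W_k((ℒ^{l_k}_k)*(μ_{k+l_k}), (ℒ^{l_k}_k)*(ν_{k+l_k})) ≤ t_k · W_{k+l_k}(μ_{k+l_k}, ν_{k+l_k}), where t_k := max{β, 1 − (1 − r^{n_k} α_k) C_{k+n_k}/B_{k+n_k}} ∈ (0,1). -/

import Mathlib

open MeasureTheory Real Filter

namespace NSShift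

/-- The ambient sequence space `ℕ^ℕ`. -/
abbrev Seq := ℕ → ℕ

/-- The shift map `T`. -/
def shift (x : Seq) : Seq := fun i => x (i + 1)

/-- Prepend one symbol to a sequence. -/
def cons (a : ℕ) (x : Seq) : Seq := fun i =>
  match i with
  | 0 => a
  | j + 1 => x j

/-- The non-stationary shift space `Σ_n` determined by alphabets `W` and
transition relations `A` (`A n i j` means `α^n_{ij} = 1`). -/
def Sig (W : ℕ → Set ℕ) (A : ℕ → ℕ → ℕ → Prop) (n : ℕ) : Set Seq :=
  {x | (∀ i, x i ∈ W (n + i)) ∧ ∀ i, A (n + i) (x i) (x (i + 1))}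

/-- `x` and `y` agree in their first `k` coordinates (lie in a common `k`-cylinder). -/
def agrees (x y : Seq) (k : ℕ) : Prop := ∀ i < k, x i = y i

open scoped Classical in
/-- The shift metric `d_r(x,y) = r^{min{i : x_i ≠ y_i}}`. -/
noncomputable def dr (r : ℝ) (x y : Seq) : ℝ :=
  if x = y then 0 else r ^ sInf {i | x i ≠ y i}

/-- `f` is locally `(r,m)`-Hölder continuous with Hölder constant `κ` of index `m` on `S`:
`V_k(f) ≤ κ r^k` for all `k ≥ m`. -/
def HolderOn (S : Set Seq) (r κ : ℝ) (m : ℕ) (f : Seq → ℝ) : Prop :=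
  ∀ k, m ≤ k → ∀ x ∈ S, ∀ y ∈ S, agrees x y k → |f x - f y| ≤ κ * r ^ k

/-- The Birkhoff sum `S_n(φ_k) = Σ_{i=0}^{n-1} φ_{k+i} ∘ T^i`. -/
noncomputable def birkhoff (φ : ℕ → Seq → ℝ) (k n : ℕ) (x : Seq) : ℝ :=
  ∑ i ∈ Finset.range n, φ (k + i) (shift^[i] x)

/-- `log B_m = Σ_{i=1}^{m} κ_{m−i} r^i`. -/
noncomputable def logB (κ : ℕ → ℝ) (r : ℝ) (m : ℕ) : ℝ :=
  ∑ i ∈ Finset.Icc 1 m, κ (m - i) * r ^ i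

/-- `B_m = exp Σ_{i=1}^{m} κ_{m−i} r^i`. -/
noncomputable def Bconst (κ : ℕ → ℝ) (r : ℝ) (m : ℕ) : ℝ := Real.exp (logB κ r m)


open scoped Classical in
/-- The Ruelle operator `ℒ_k(f)(x) = Σ_{Ty=x} e^{φ_k(y)} f(y)`, for `x ∈ Σ_{k+1}`. -/
noncomputable def Ruelle (W : ℕ → Set ℕ) (A : ℕ → ℕ → ℕ → Prop) (φ : ℕ → Seq → ℝ)
    (k : ℕ) (f : Seq → ℝ) (x : Seq) : ℝ :=
  ∑' a : ℕ, if cons a x ∈ Sig W A k then Real.exp (φ k (cons a x)) * f (cons a x) else 0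

/-- The iterated Ruelle operator `ℒ^n_k = ℒ_{k+n-1} ∘ ⋯ ∘ ℒ_k`. -/
noncomputable def RuelleIter (W : ℕ → Set ℕ) (A : ℕ → ℕ → ℕ → Prop) (φ : ℕ → Seq → ℝ)
    (k : ℕ) : ℕ → (Seq → ℝ) → Seq → ℝ
  | 0 => fun f => f
  | n + 1 => fun f => Ruelle W A φ (k + n) (RuelleIter W A φ k n f)

/-- `w` is a `k`-admissible word of length `len`. -/
def Adm (W : ℕ → Set ℕ) (A : ℕ → ℕ → ℕ → Prop) (k : ℕ) (w : ℕ → ℕ) (len : ℕ) : Prop :=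
  (∀ i < len, w i ∈ W (k + i)) ∧ ∀ i, i + 1 < len → A (k + i) (w i) (w (i + 1))

/-- Prepend the first `len` symbols of `w` to the sequence `x` (the inverse branch `τ_w`). -/
def prepend (w : ℕ → ℕ) (len : ℕ) (x : Seq) : Seq := fun i =>
  if i < len then w i else x (i - len)

/-- The Lipschitz constant of `f` on `S` with respect to the distance function `d`,
as the least constant `K ≥ 0` with `|f x − f y| ≤ K d(x,y)` on `S`. -/
noncomputable def LipC (S : Set Seq) (d : Seq → Seq → ℝ) (f : Seq → ℝ) : ℝ :=
  sInf {K : ℝ | 0 ≤ K ∧ ∀ x ∈ S, ∀ y ∈ S, |f x - f y| ≤ K * d x y}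

/-- The Vasershtein (Wasserstein) distance of two Borel measures with respect to the
cost function `d`, as the infimum of `∫ d dm` over couplings `m`. -/
noncomputable def Wass (d : Seq → Seq → ℝ) (μ ν : Measure Seq) : ℝ :=
  sInf {t : ℝ | ∃ m : Measure (Seq × Seq),
    m.map Prod.fst = μ ∧ m.map Prod.snd = ν ∧ t = ∫ p, d p.1 p.2 ∂m}

/-- The dual Ruelle operator `ℒ^*_k` on Borel measures, satisfying
`∫ f d(ℒ^*_k μ) = ∫ ℒ_k(f) dμ`. -/
noncomputable def dualRuelle (W : ℕ → Set ℕ) (A : ℕ → ℕ → ℕ → Prop) (φ : ℕ → Seq → ℝ)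
    (k : ℕ) (μ : Measure Seq) : Measure Seq :=
  Measure.sum fun a : ℕ =>
    (μ.withDensity fun x =>
      ENNReal.ofReal ((Sig W A k).indicator (fun y => Real.exp (φ k y)) (cons a x))).map (cons a)

/-- The iterated dual operator `(ℒ^n_k)^* = ℒ^*_k ∘ ⋯ ∘ ℒ^*_{k+n-1}`. -/
noncomputable def dualRuelleIter (W : ℕ → Set ℕ) (A : ℕ → ℕ → ℕ → Prop) (φ : ℕ → Seq → ℝ) :
    (k : ℕ) → ℕ → Measure Seq → Measure Seq
  | _, 0, μ => μ
  | k, n + 1, μ => dualRuelle W A φ k (dualRuelleIter W A φ (k + 1) n μ)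

/-- A non-stationary shift space `((Σ_n), T, (φ_n))` satisfying property `(H*)`, together
with the choices of the constants `β`, `n_k`, base letters `o_k`, mixing times `m_k`,
connecting words `u(x)` and lower bounds `C_k` used in the coupling construction. -/
structure HstarSystem where
  /-- the alphabets `𝒲¹_n` -/
  W : ℕ → Set ℕ
  /-- the transition matrices: `A n i j` iff `α^n_{ij} = 1` -/
  A : ℕ → ℕ → ℕ → Prop
  /-- the potentials `φ_n : Σ_n → ℝ` -/
  φ : ℕ → Seq → ℝ
  /-- the Hölder parameter -/
  r : ℝ
  /-- the parameter `β ∈ (0,1)` -/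
  β : ℝ
  /-- the Hölder constants `κ_n` of `φ_n` -/
  κ : ℕ → ℝ
  /-- the finite set `ℐ` from the big preimages property -/
  I : Finset ℕ
  /-- the infinite set `𝒦` from the big preimages property -/
  K : Set ℕ
  /-- the base letters `o_k ∈ 𝒲¹_k` -/
  o : ℕ → ℕ
  /-- the integers `n_k` -/
  nseq : ℕ → ℕ
  /-- the mixing times `m_k` -/
  mseq : ℕ → ℕ
  /-- the connecting words `u(x) ∈ 𝒲^{m_k}_k` (as sequences; only the first `m_k`
  symbols are relevant) -/
  u : ℕ → Seq → Seq
  /-- the constants `C_k` -/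
  Cseq : ℕ → ℝ
  hr : 0 < r ∧ r < 1
  hβ : 0 < β ∧ β < 1
  κnonneg : ∀ n, 0 ≤ κ n
  hKinf : K.Infinite
  /-- no zero rows -/
  row : ∀ n, ∀ i ∈ W n, ∃ j ∈ W (n + 1), A n i j
  /-- no zero columns -/
  col : ∀ n, ∀ i ∈ W (n + 1), ∃ j ∈ W n, A n j i
  /-- topological mixing -/
  mixing : ∀ k : ℕ, ∀ a ∈ W k, ∀ b : ℕ, ∃ N : ℕ, ∀ n, N ≤ n → b ∈ W (k + n) →
    ∃ x ∈ Sig W A k, x 0 = a ∧ x n = b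
  /-- big preimages along `𝒦` -/
  bigPre : ∀ n ∈ K, 1 ≤ n → ∀ a ∈ W n, ∃ b ∈ I, (b : ℕ) ∈ W (n - 1) ∧ A (n - 1) b a
  /-- `ℒ_n(1) = 1` -/
  normalized : ∀ k, ∀ x ∈ Sig W A (k + 1), Ruelle W A φ k (fun _ => 1) x = 1
  /-- `φ_n` is locally `(r,2)`-Hölder for `n ∉ 𝒦` -/
  holder2 : ∀ n ∉ K, HolderOn (Sig W A n) r (κ n) 2 (φ n)
  /-- `φ_n` is locally `(r,1)`-Hölder for `n ∈ 𝒦` -/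
  holder1 : ∀ n ∈ K, HolderOn (Sig W A n) r (κ n) 1 (φ n)
  ho : ∀ k, o k ∈ W k
  /-- `n_k ≥ ⌊−log α_k / log r⌋ + 1` where `α_k = B_k/β` -/
  hn : ∀ k, (⌊-Real.log (Bconst κ r k / β) / Real.log r⌋ + 1 : ℤ) ≤ (nseq k : ℤ)
  /-- `m_k ≥ 1`, `k + m_k ∈ 𝒦` -/
  hm_mem : ∀ k, 1 ≤ mseq k ∧ k + mseq k ∈ K
  /-- `(A_k ⋯ A_{k+m_k−2})_{o_k j} ≥ 1` for all `j ∈ ℐ ∩ 𝒲¹_{k+m_k−1}` -/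
  hm_conn : ∀ k, ∀ j ∈ I, (j : ℕ) ∈ W (k + mseq k - 1) →
    ∃ w : ℕ → ℕ, Adm W A k w (mseq k) ∧ w 0 = o k ∧ w (mseq k - 1) = j
  /-- minimality of `m_k` -/
  hm_min : ∀ k n, (1 ≤ n ∧ k + n ∈ K ∧ ∀ j ∈ I, (j : ℕ) ∈ W (k + n - 1) →
      ∃ w : ℕ → ℕ, Adm W A k w n ∧ w 0 = o k ∧ w (n - 1) = j) → mseq k ≤ n
  /-- the connecting word `u(x)` starts at `o_k`, ends in `ℐ`, and
  `x ∈ T^{m_k}([u(x)]_k)` -/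
  hu : ∀ k, ∀ x ∈ Sig W A (k + mseq k), prepend (u k x) (mseq k) x ∈ Sig W A k ∧
    u k x 0 = o k ∧ u k x (mseq k - 1) ∈ I
  hC_pos : ∀ k, 0 < Cseq k
  /-- `C_k` is a lower bound for `e^{S_{m_k} φ_k (τ_{u(x)} x)}` -/
  hC_le : ∀ k, ∀ x ∈ Sig W A (k + mseq k),
    Cseq k ≤ Real.exp (birkhoff φ k (mseq k) (prepend (u k x) (mseq k) x))

namespace HstarSystem

variable (S : HstarSystem)

/-- `α_k := B_k / β`. -/
noncomputable def alphaC (k : ℕ) : ℝ := Bconst S.κ S.r k / S.β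

/-- the metric `d̄_k(x,y) := min{1, α_k d_r(x,y)}`. -/
noncomputable def dbar (k : ℕ) (x y : Seq) : ℝ := min 1 (S.alphaC k * dr S.r x y)

/-- `s_k := 1 − (1 − r^{n_k} α_k) C_{k+n_k}/B_{k+n_k}`. -/
noncomputable def sconst (k : ℕ) : ℝ :=
  1 - (1 - S.r ^ S.nseq k * S.alphaC k) * S.Cseq (k + S.nseq k) / Bconst S.κ S.r (k + S.nseq k)

/-- `t_k := max{β, s_k}`. -/
noncomputable def tconst (k : ℕ) : ℝ := max S.β (S.sconst k)

/-- `l_k := n_k + m_{k+n_k}`. -/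
def lconst (k : ℕ) : ℕ := S.nseq k + S.mseq (k + S.nseq k)

end HstarSystem

/-!
Split a coupling of `μ` and `ν` according to whether `d̄ < 1` and push the two parts separately.

If `d̄(x,y) < 1`, then `x` and `y` have the same first letter, since `α ≥ 1`, hence the same inverse
branches. Moving both points along a common branch with the smaller of the two weights multiplies
`d_r` by `r` per step. The recursion `log B_{k+1} = r (κ_k + log B_k)` makes the Hölder losses
telescope, so that a fraction at least `exp (-log B · d_r(x,y)) ≥ 1 - log B · d_r(x,y)` of the mass
has been moved in the end. Coupling the remaining mass arbitrarily, at cost at most `1`, gives total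
cost at most `(1 + log B) d_r(x,y) ≤ B d_r(x,y) = β d̄(x,y)`.

If `d̄(x,y) = 1`, the first `m` steps put mass at least `C` of either image into the cylinder of the
base letter. Couple these parts arbitrarily and move them along common branches for `n` more steps:
a fraction at least `1 / B` survives, at `d̄`-distance at most `r^n α`. The remaining mass costs at
most `1`, which gives `1 - (1 - r^n α) C / B`.
-/

open scoped ENNReal

section Coupling

variable {X Y : Type*} [MeasurableSpace X] [MeasurableSpace Y]

/-- `m` is a coupling of `μ` and `ν`: its marginals are `μ` and `ν`. The masses of the marginals
are arbitrary, so that couplings can be added. -/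
structure IsCoupling (m : Measure (X × Y)) (μ : Measure X) (ν : Measure Y) : Prop where
  fst_eq : m.fst = μ
  snd_eq : m.snd = ν

/-- `m` is a subcoupling of `μ` and `ν`: its marginals are dominated by `μ` and `ν`, so that it
transports only a part of the mass. -/
structure IsSubcoupling (m : Measure (X × Y)) (μ : Measure X) (ν : Measure Y) : Prop where
  fst_le : m.fst ≤ μ
  snd_le : m.snd ≤ ν

variable {m m' : Measure (X × Y)} {μ μ' : Measure X} {ν ν' : Measure Y}

lemma IsCoupling.isSubcoupling (h : IsCoupling m μ ν) : IsSubcoupling m μ ν :=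
  ⟨h.fst_eq.le, h.snd_eq.le⟩

lemma IsCoupling.add (h : IsCoupling m μ ν) (h' : IsCoupling m' μ' ν') :
    IsCoupling (m + m') (μ + μ') (ν + ν') :=
  ⟨by rw [Measure.fst_add, h.fst_eq, h'.fst_eq], by rw [Measure.snd_add, h.snd_eq, h'.snd_eq]⟩

lemma IsCoupling.isProbabilityMeasure [IsProbabilityMeasure μ] (h : IsCoupling m μ ν) :
    IsProbabilityMeasure m :=
  ⟨by rw [← Measure.fst_univ, h.fst_eq, measure_univ]⟩

lemma IsSubcoupling.mono (h : IsSubcoupling m μ ν) (hμ : μ ≤ μ') (hν : ν ≤ ν') :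
    IsSubcoupling m μ' ν' :=
  ⟨h.fst_le.trans hμ, h.snd_le.trans hν⟩

lemma IsSubcoupling.ae_fst (h : IsSubcoupling m μ ν) {P : X → Prop} (hP : ∀ᵐ x ∂μ, P x) :
    ∀ᵐ p ∂m, P p.1 :=
  ae_of_ae_map measurable_fst.aemeasurable (ae_mono h.fst_le hP)

lemma IsSubcoupling.ae_snd (h : IsSubcoupling m μ ν) {P : Y → Prop} (hP : ∀ᵐ y ∂ν, P y) :
    ∀ᵐ p ∂m, P p.2 :=
  ae_of_ae_map measurable_snd.aemeasurable (ae_mono h.snd_le hP)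

lemma IsSubcoupling.measure_univ_le (h : IsSubcoupling m μ ν) : m .univ ≤ μ .univ :=
  Measure.fst_univ.symm.trans_le (h.fst_le .univ)

lemma exists_isCoupling_of_measure_univ_eq [IsFiniteMeasure μ] [IsFiniteMeasure ν]
    (h : μ .univ = ν .univ) : ∃ m, IsCoupling m μ ν := by
  rcases eq_or_ne (μ .univ) 0 with h₀ | h₀
  · refine ⟨0, ?_, ?_⟩
    · rw [Measure.fst_zero, Measure.measure_univ_eq_zero.1 h₀]
    · rw [Measure.snd_zero, Measure.measure_univ_eq_zero.1 (h.symm.trans h₀)]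
  · have h_cancel : (μ .univ)⁻¹ * μ .univ = 1 := ENNReal.inv_mul_cancel h₀ (measure_ne_top _ _)
    refine ⟨(μ .univ)⁻¹ • μ.prod ν, ?_, ?_⟩
    · rw [Measure.fst, Measure.map_smul, Measure.map_fst_prod, ← h, smul_smul, h_cancel, one_smul]
    · rw [Measure.snd, Measure.map_smul, Measure.map_snd_prod, smul_smul, h_cancel, one_smul]

lemma exists_le_measure_univ_eq [IsFiniteMeasure μ] {t : ℝ≥0∞} (ht : t ≤ μ .univ) :
    ∃ μ' ≤ μ, μ' .univ = t := by
  refine ⟨(t / μ .univ) • μ, Measure.le_iff'.2 fun s => ?_, ?_⟩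
  · rw [Measure.smul_apply, smul_eq_mul]
    exact mul_le_of_le_one_left zero_le (ENNReal.div_le_of_le_mul (by rwa [one_mul]))
  · rw [Measure.smul_apply, smul_eq_mul]
    refine ENNReal.div_mul_cancel' (fun h₀ => ?_) fun h_top => absurd h_top (measure_ne_top _ _)
    exact le_antisymm (h₀ ▸ ht) zero_le

lemma exists_isSubcoupling_measure_univ_eq [IsFiniteMeasure μ] [IsFiniteMeasure ν] {t : ℝ≥0∞}
    (hμ : t ≤ μ .univ) (hν : t ≤ ν .univ) : ∃ m, IsSubcoupling m μ ν ∧ m .univ = t := by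
  obtain ⟨μ', hμ', rfl⟩ := exists_le_measure_univ_eq hμ
  obtain ⟨ν', hν', h_eq⟩ := exists_le_measure_univ_eq hν
  have := isFiniteMeasure_of_le μ hμ'
  have := isFiniteMeasure_of_le ν hν'
  obtain ⟨m, hm⟩ := exists_isCoupling_of_measure_univ_eq h_eq.symm
  exact ⟨m, hm.isSubcoupling.mono hμ' hν', by rw [← Measure.fst_univ, hm.fst_eq]⟩

lemma IsSubcoupling.exists_isCoupling_add [IsFiniteMeasure μ] [IsFiniteMeasure ν]
    (h : IsSubcoupling m μ ν) (hμν : μ .univ = ν .univ) :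
    ∃ R : Measure (X × Y), IsCoupling (m + R) μ ν ∧ R .univ = μ .univ - m .univ := by
  have := isFiniteMeasure_of_le μ h.fst_le
  have := isFiniteMeasure_of_le ν h.snd_le
  have h_res_fst : (μ - m.fst) .univ = μ .univ - m .univ := by
    rw [Measure.sub_apply .univ h.fst_le, Measure.fst_univ]
  have h_res_snd : (ν - m.snd) .univ = μ .univ - m .univ := by
    rw [Measure.sub_apply .univ h.snd_le, Measure.snd_univ, hμν]
  obtain ⟨R, hR⟩ := exists_isCoupling_of_measure_univ_eq (h_res_fst.trans h_res_snd.symm)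
  refine ⟨R, ⟨?_, ?_⟩, by rw [← Measure.fst_univ, hR.fst_eq, h_res_fst]⟩
  · rw [Measure.fst_add, hR.fst_eq, add_comm, Measure.sub_add_cancel_of_le h.fst_le]
  · rw [Measure.snd_add, hR.snd_eq, add_comm, Measure.sub_add_cancel_of_le h.snd_le]

lemma IsSubcoupling.exists_isCoupling_lintegral_le [IsFiniteMeasure μ] [IsFiniteMeasure ν]
    (h : IsSubcoupling m μ ν) (hμν : μ .univ = ν .univ) {f : X × Y → ℝ≥0∞} (hf : ∀ p, f p ≤ 1) :
    ∃ Γ, IsCoupling Γ μ ν ∧ ∫⁻ p, f p ∂Γ ≤ ∫⁻ p, f p ∂m + (μ .univ - m .univ) := by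
  obtain ⟨R, hR, hR_univ⟩ := h.exists_isCoupling_add hμν
  refine ⟨m + R, hR, ?_⟩
  rw [lintegral_add_measure, ← hR_univ, ← lintegral_one]
  gcongr with p
  exact hf p

end Coupling

section Wasserstein

variable {d d' : Seq → Seq → ℝ} {μ ν μ' ν' : Measure Seq}

lemma Wass_le_integral (hd : ∀ x y, 0 ≤ d x y) {m : Measure (Seq × Seq)}
    (h : IsCoupling m μ ν) : Wass d μ ν ≤ ∫ p, d p.1 p.2 ∂m := by
  refine csInf_le ⟨0, ?_⟩ ⟨m, h.fst_eq, h.snd_eq, rfl⟩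
  rintro _ ⟨_, -, -, rfl⟩
  exact integral_nonneg fun p => hd p.1 p.2

lemma le_Wass [IsProbabilityMeasure μ] [IsProbabilityMeasure ν] {a : ℝ}
    (h : ∀ m, IsCoupling m μ ν → a ≤ ∫ p, d p.1 p.2 ∂m) : a ≤ Wass d μ ν := by
  refine le_csInf ⟨_, μ.prod ν, Measure.fst_prod, Measure.snd_prod, rfl⟩ ?_
  rintro _ ⟨m, h_fst, h_snd, rfl⟩
  exact h m ⟨h_fst, h_snd⟩

lemma Wass_le_mul_Wass [IsProbabilityMeasure μ] [IsProbabilityMeasure ν] {t : ℝ} (ht : 0 < t)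
    (hd_meas : Measurable fun p : Seq × Seq => d p.1 p.2) (hd_nonneg : ∀ x y, 0 ≤ d x y)
    (hd_le : ∀ x y, d x y ≤ 1)
    (hd'_meas : Measurable fun p : Seq × Seq => d' p.1 p.2) (hd'_nonneg : ∀ x y, 0 ≤ d' x y)
    (h : ∀ m, IsCoupling m μ ν → ∃ Γ, IsCoupling Γ μ' ν' ∧
      ∫⁻ p, .ofReal (d' p.1 p.2) ∂Γ ≤ .ofReal t * ∫⁻ p, .ofReal (d p.1 p.2) ∂m) :
    Wass d' μ' ν' ≤ t * Wass d μ ν := by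
  rw [← div_le_iff₀' ht]
  refine le_Wass fun m hm => ?_
  have := hm.isProbabilityMeasure
  have hd_int : Integrable (fun p : Seq × Seq => d p.1 p.2) m :=
    .of_mem_Icc 0 1 hd_meas.aemeasurable (.of_forall fun p => ⟨hd_nonneg _ _, hd_le _ _⟩)
  obtain ⟨Γ, hΓ, h_le⟩ := h m hm
  rw [div_le_iff₀' ht]
  refine (Wass_le_integral hd'_nonneg hΓ).trans ?_
  rw [integral_eq_lintegral_of_nonneg_ae (.of_forall fun p => hd'_nonneg _ _)
    hd'_meas.aestronglyMeasurable]
  refine ENNReal.toReal_le_of_le_ofReal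
    (mul_nonneg ht.le (integral_nonneg fun p => hd_nonneg _ _)) ?_
  rwa [ENNReal.ofReal_mul ht.le, ofReal_integral_eq_lintegral_ofReal hd_int
    (.of_forall fun p => hd_nonneg _ _)]

end Wasserstein

section BranchMeasure

variable {ι X Y X' Y' : Type*} [MeasurableSpace X] [MeasurableSpace Y] [MeasurableSpace X']
  [MeasurableSpace Y']

/-- The image of `μ` under the multivalued map with branches `c a`, each weighted by `g a`. Both the
dual Ruelle operator and its action on couplings are of this form. -/
noncomputable def branchMeasure (g : ι → X → ℝ≥0∞) (c : ι → X → Y) (μ : Measure X) : Measure Y :=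
  Measure.sum fun a => (μ.withDensity (g a)).map (c a)

variable [Countable ι] {g : ι → X → ℝ≥0∞} {c : ι → X → Y} {μ : Measure X}
  (hg : ∀ a, Measurable (g a)) (hc : ∀ a, Measurable (c a))
include hg hc

lemma lintegral_branchMeasure {f : Y → ℝ≥0∞} (hf : Measurable f) :
    ∫⁻ y, f y ∂branchMeasure g c μ = ∫⁻ x, ∑' a, g a x * f (c a x) ∂μ := by
  have hfc (a) : Measurable fun x => f (c a x) := hf.comp (hc a)
  rw [branchMeasure, lintegral_sum_measure, lintegral_tsum]
  · refine tsum_congr fun a => ?_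
    rw [lintegral_map hf (hc a), lintegral_withDensity_eq_lintegral_mul μ (hg a) (hfc a)]
    rfl
  · exact fun a => ((hg a).mul (hfc a)).aemeasurable

lemma branchMeasure_apply {s : Set Y} (hs : MeasurableSet s) :
    branchMeasure g c μ s = ∫⁻ x, ∑' a, g a x * s.indicator 1 (c a x) ∂μ := by
  rw [← lintegral_indicator_one hs, lintegral_branchMeasure hg hc (measurable_one.indicator hs)]

lemma branchMeasure_univ (h : ∀ᵐ x ∂μ, ∑' a, g a x = 1) :
    branchMeasure g c μ .univ = μ .univ := by
  rw [branchMeasure_apply hg hc .univ, ← lintegral_one]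
  exact lintegral_congr_ae (h.mono fun x hx => by simpa using hx)

lemma ae_branchMeasure {s : Set Y} (hs : MeasurableSet s)
    (h : ∀ᵐ x ∂μ, ∀ a, g a x ≠ 0 → c a x ∈ s) : ∀ᵐ y ∂branchMeasure g c μ, y ∈ s := by
  rw [ae_iff, ← Set.compl_def, branchMeasure_apply hg hc hs.compl]
  refine lintegral_eq_zero_of_ae_eq_zero (h.mono fun x hx => ENNReal.tsum_eq_zero.2 fun a => ?_)
  by_cases h₀ : g a x = 0
  · rw [h₀, zero_mul]
  · rw [Set.indicator_of_notMem (Set.notMem_compl_iff.2 (hx a h₀)), mul_zero]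

lemma branchMeasure_add (μ ν : Measure X) :
    branchMeasure g c (μ + ν) = branchMeasure g c μ + branchMeasure g c ν := by
  ext s hs
  simp only [Measure.add_apply, branchMeasure_apply hg hc hs, lintegral_add_measure]

lemma map_branchMeasure_le {g' : ι → X' → ℝ≥0∞} {c' : ι → X' → Y'} {μ' : Measure X'}
    (hg' : ∀ a, Measurable (g' a)) (hc' : ∀ a, Measurable (c' a)) {p : X → X'} {q : Y → Y'}
    (hp : Measurable p) (hq : Measurable q) (h_semiconj : ∀ a x, q (c a x) = c' a (p x))
    (h_le : ∀ a x, g a x ≤ g' a (p x)) (hμ : μ.map p ≤ μ') :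
    (branchMeasure g c μ).map q ≤ branchMeasure g' c' μ' := by
  refine Measure.le_iff.2 fun s hs => ?_
  have h_meas : Measurable fun x' => ∑' a, g' a x' * s.indicator 1 (c' a x') :=
    .tsum fun a => (hg' a).mul ((measurable_one.indicator hs).comp (hc' a))
  rw [Measure.map_apply hq hs, branchMeasure_apply hg hc (hq hs), branchMeasure_apply hg' hc' hs]
  calc ∫⁻ x, ∑' a, g a x * (q ⁻¹' s).indicator 1 (c a x) ∂μ
      ≤ ∫⁻ x, ∑' a, g' a (p x) * s.indicator 1 (c' a (p x)) ∂μ := by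
        gcongr with x a
        · exact h_le a x
        · rw [← h_semiconj]; rfl
    _ = ∫⁻ x', ∑' a, g' a x' * s.indicator 1 (c' a x') ∂μ.map p := (lintegral_map h_meas hp).symm
    _ ≤ ∫⁻ x', ∑' a, g' a x' * s.indicator 1 (c' a x') ∂μ' := lintegral_mono' hμ le_rfl

end BranchMeasure

section ShiftSpace

variable {W : ℕ → Set ℕ} {A : ℕ → ℕ → ℕ → Prop} {r κ : ℝ} {k a n : ℕ} {x y : Seq}

lemma cons_head_shift (y : Seq) : cons (y 0) (shift y) = y := by
  funext i
  cases i <;> rfl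

lemma shift_iterate_apply (n : ℕ) (x : Seq) (i : ℕ) : shift^[n] x i = x (i + n) := by
  induction n generalizing x with
  | zero => rfl
  | succ n ih => rw [Function.iterate_succ_apply, ih]; rfl

lemma shift_iterate_prepend (w : ℕ → ℕ) (n : ℕ) (x : Seq) : shift^[n] (prepend w n x) = x := by
  funext i
  rw [shift_iterate_apply, prepend, if_neg (Nat.le_add_left n i).not_gt, Nat.add_sub_cancel]

lemma agrees_cons (h : agrees x y n) : agrees (cons a x) (cons a y) (n + 1) := by
  rintro (_ | i) hi
  · rfl
  · exact h i (Nat.succ_lt_succ_iff.1 hi)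

lemma cons_mem_Sig_of_head_eq (hx : cons a x ∈ Sig W A k) (hy : y ∈ Sig W A (k + 1))
    (h_head : x 0 = y 0) : cons a y ∈ Sig W A k := by
  refine ⟨?_, ?_⟩ <;> rintro (_ | i)
  · exact hx.1 0
  · exact Nat.add_right_comm k i 1 ▸ hy.1 i
  · exact (h_head ▸ hx.2 0 : A (k + 0) a (y 0))
  · exact Nat.add_right_comm k i 1 ▸ hy.2 i

lemma shift_mem_Sig (hx : x ∈ Sig W A k) : shift x ∈ Sig W A (k + 1) :=
  ⟨fun i => Nat.add_right_comm k 1 i ▸ hx.1 (i + 1),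
    fun i => Nat.add_right_comm k 1 i ▸ hx.2 (i + 1)⟩

lemma dr_self (r : ℝ) (x : Seq) : dr r x x = 0 := if_pos rfl

lemma dr_eq_pow_firstDiff (r : ℝ) (h : x ≠ y) : dr r x y = r ^ PiNat.firstDiff x y := by
  have h_nonempty : {i | x i ≠ y i}.Nonempty := Function.ne_iff.1 h
  rw [dr, if_neg h, PiNat.firstDiff, dif_pos h, Nat.sInf_def h_nonempty]
  congr

lemma dr_nonneg (hr : 0 ≤ r) (x y : Seq) : 0 ≤ dr r x y := by
  rw [dr]
  split_ifs <;> positivity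

lemma dr_le_one (hr : 0 ≤ r) (hr' : r ≤ 1) (x y : Seq) : dr r x y ≤ 1 := by
  rw [dr]
  split_ifs
  · exact zero_le_one
  · exact pow_le_one₀ hr hr'

lemma head_eq_of_dr_lt_one (h : dr r x y < 1) : x 0 = y 0 := by
  by_contra h_head
  have h_ne : x ≠ y := fun h_eq => h_head (congrFun h_eq 0)
  have h_zero : PiNat.firstDiff x y = 0 :=
    Nat.eq_zero_of_not_pos fun h_pos => h_head (PiNat.apply_eq_of_lt_firstDiff h_pos)
  rw [dr_eq_pow_firstDiff r h_ne, h_zero, pow_zero] at h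
  exact lt_irrefl _ h

lemma firstDiff_cons (a : ℕ) (h : x ≠ y) :
    PiNat.firstDiff (cons a x) (cons a y) = PiNat.firstDiff x y + 1 := by
  have h_diff : cons a x (PiNat.firstDiff x y + 1) ≠ cons a y (PiNat.firstDiff x y + 1) :=
    PiNat.apply_firstDiff_ne h
  refine le_antisymm (not_lt.1 fun h_lt => h_diff (PiNat.apply_eq_of_lt_firstDiff h_lt)) ?_
  refine (PiNat.mem_cylinder_iff_le_firstDiff (fun h_eq => h_diff (congrFun h_eq _)) _).1 ?_
  exact agrees_cons fun i => PiNat.apply_eq_of_lt_firstDiff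

lemma dr_cons (r : ℝ) (a : ℕ) (x y : Seq) : dr r (cons a x) (cons a y) = r * dr r x y := by
  rcases eq_or_ne x y with rfl | h
  · rw [dr_self, dr_self, mul_zero]
  · have h_cons : cons a x ≠ cons a y := fun h_eq => h (funext fun i => congrFun h_eq (i + 1))
    rw [dr_eq_pow_firstDiff r h, dr_eq_pow_firstDiff r h_cons, firstDiff_cons a h, pow_succ']

lemma measurable_cons (a : ℕ) : Measurable (cons a) :=
  measurable_pi_lambda _ fun
    | 0 => measurable_const
    | i + 1 => measurable_pi_apply i

lemma measurable_dr (r : ℝ) : Measurable fun p : Seq × Seq => dr r p.1 p.2 := by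
  classical
  have h_ex (p : Seq × Seq) : ∃ i, p.1 = p.2 ∨ p.1 i ≠ p.2 i := by
    by_cases h : p.1 = p.2
    · exact ⟨0, .inl h⟩
    · exact (Function.ne_iff.1 h).imp fun i => .inr
  have h_dr : (fun p : Seq × Seq => dr r p.1 p.2) =
      fun p => if p.1 = p.2 then 0 else r ^ Nat.find (h_ex p) := by
    funext p
    by_cases h : p.1 = p.2
    · rw [dr, if_pos h, if_pos h]
    · have h_nonempty : {i | p.1 i ≠ p.2 i}.Nonempty := Function.ne_iff.1 h
      rw [dr, if_neg h, if_neg h]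
      congr 1
      exact le_antisymm (Nat.sInf_le ((Nat.find_spec (h_ex p)).resolve_left h))
        (Nat.find_min' (h_ex p) (.inr (Nat.sInf_mem h_nonempty)))
  have h_diag : MeasurableSet {p : Seq × Seq | p.1 = p.2} :=
    measurableSet_eq_fun measurable_fst measurable_snd
  rw [h_dr]
  refine .ite h_diag measurable_const ((measurable_find h_ex fun i => h_diag.union ?_).const_pow r)
  exact (measurableSet_eq_fun ((measurable_pi_apply i).comp measurable_fst)
    ((measurable_pi_apply i).comp measurable_snd)).compl

lemma measurableSet_Sig (W : ℕ → Set ℕ) (A : ℕ → ℕ → ℕ → Prop) (n : ℕ) :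
    MeasurableSet (Sig W A n) := by
  simp only [Sig, Set.ofPred_and, Set.ofPred_forall]
  refine (MeasurableSet.iInter fun i => ?_).inter (.iInter fun i => ?_)
  · exact measurable_pi_apply i (.of_discrete (s := W (n + i)))
  · have h_pair : Measurable fun x : Seq => (x i, x (i + 1)) :=
      (measurable_pi_apply i).prodMk (measurable_pi_apply (i + 1))
    exact h_pair (.of_discrete (s := {q | A (n + i) q.1 q.2}))

namespace HolderOn

variable {s : Set Seq} {m : ℕ} {f : Seq → ℝ}

lemma mono_index {m' : ℕ} (hf : HolderOn s r κ m f) (hm : m ≤ m') : HolderOn s r κ m' f :=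
  fun k hk => hf k (hm.trans hk)

lemma continuousOn (hf : HolderOn s r κ m f) (hr : 0 ≤ r) (hr' : r < 1) : ContinuousOn f s := by
  intro x hx
  rw [ContinuousWithinAt, Metric.tendsto_nhds]
  intro ε hε
  have h_lim : Tendsto (fun j : ℕ => κ * r ^ j) atTop (nhds 0) := by
    simpa only [mul_zero] using (tendsto_pow_atTop_nhds_zero_of_lt_one hr hr').const_mul κ
  obtain ⟨j, hj, hmj⟩ := ((h_lim.eventually_lt_const hε).and (eventually_ge_atTop m)).exists
  have h_cylinder : PiNat.cylinder x j ∈ nhds x :=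
    (PiNat.isOpen_cylinder _ x j).mem_nhds (PiNat.self_mem_cylinder x j)
  filter_upwards [mem_nhdsWithin_of_mem_nhds h_cylinder, self_mem_nhdsWithin] with y hy hys
  exact (hf j hmj y hys x hx hy).trans_lt hj

lemma abs_sub_le (hf : HolderOn s r κ m f) (hx : x ∈ s) (hy : y ∈ s) (h : agrees x y m) :
    |f x - f y| ≤ κ * dr r x y := by
  rcases eq_or_ne x y with rfl | h_ne
  · rw [sub_self, abs_zero, dr_self, mul_zero]
  · rw [dr_eq_pow_firstDiff r h_ne]
    refine hf _ (not_lt.1 fun h_lt => ?_) x hx y hy fun i => PiNat.apply_eq_of_lt_firstDiff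
    exact PiNat.apply_firstDiff_ne h_ne (h _ h_lt)

end HolderOn

end ShiftSpace

section DualRuelle

variable {W : ℕ → Set ℕ} {A : ℕ → ℕ → ℕ → Prop} {φ : ℕ → Seq → ℝ} {k m n : ℕ} {x y : Seq}
  {μ ν : Measure Seq}

/-- The weight `e^{φ_k}` on `Σ_k`, extended by `0`, with values in `[0,∞]`. -/
noncomputable def weight (W : ℕ → Set ℕ) (A : ℕ → ℕ → ℕ → Prop) (φ : ℕ → Seq → ℝ) (k : ℕ)
    (y : Seq) : ℝ≥0∞ :=
  .ofReal ((Sig W A k).indicator (fun y => exp (φ k y)) y)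

lemma weight_of_mem (hy : y ∈ Sig W A k) : weight W A φ k y = .ofReal (exp (φ k y)) := by
  rw [weight, Set.indicator_of_mem hy]

lemma weight_of_notMem (hy : y ∉ Sig W A k) : weight W A φ k y = 0 := by
  rw [weight, Set.indicator_of_notMem hy, ENNReal.ofReal_zero]

lemma measurable_weight (hφ : ContinuousOn (φ k) (Sig W A k)) : Measurable (weight W A φ k) := by
  classical
  have h_exp : ContinuousOn (fun y => exp (φ k y)) (Sig W A k) :=
    continuous_exp.comp_continuousOn hφ
  have h_piecewise := h_exp.measurable_piecewise continuousOn_const (g := fun _ => (0 : ℝ))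
    (measurableSet_Sig W A k)
  unfold weight
  simp only [← Set.piecewise_eq_indicator]
  exact h_piecewise.ennreal_ofReal

lemma tsum_weight_cons (h : Ruelle W A φ k (fun _ => 1) x = 1) :
    ∑' a, weight W A φ k (cons a x) = 1 := by
  classical
  have h_term (a : ℕ) : weight W A φ k (cons a x) =
      .ofReal (if cons a x ∈ Sig W A k then exp (φ k (cons a x)) * 1 else 0) := by
    rw [weight, Set.indicator_apply, mul_one]
  have h_summable : Summable fun a =>
      if cons a x ∈ Sig W A k then exp (φ k (cons a x)) * 1 else 0 :=
    not_imp_comm.1 tsum_eq_zero_of_not_summable fun h₀ => zero_ne_one (h₀.symm.trans h)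
  simp only [h_term]
  rw [← ENNReal.ofReal_tsum_of_nonneg (fun a => by split_ifs <;> positivity) h_summable,
    ← ENNReal.ofReal_one, ← h, Ruelle]
  congr!

lemma dualRuelle_eq_branchMeasure (k : ℕ) (μ : Measure Seq) :
    dualRuelle W A φ k μ = branchMeasure (fun a x => weight W A φ k (cons a x)) cons μ :=
  rfl

section Measurable

variable (hw : ∀ k, Measurable (weight W A φ k))
include hw

lemma measurable_weight_cons (k a : ℕ) : Measurable fun x => weight W A φ k (cons a x) :=
  (hw k).comp (measurable_cons a)

lemma dualRuelleIter_add_measure (k n : ℕ) (μ ν : Measure Seq) :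
    dualRuelleIter W A φ k n (μ + ν) =
      dualRuelleIter W A φ k n μ + dualRuelleIter W A φ k n ν := by
  induction n generalizing k with
  | zero => rfl
  | succ n ih =>
    simp only [dualRuelleIter, ih, dualRuelle_eq_branchMeasure]
    exact branchMeasure_add (measurable_weight_cons hw k) measurable_cons _ _

lemma ae_dualRuelleIter_mem_Sig (h : ∀ᵐ x ∂μ, x ∈ Sig W A (k + n)) :
    ∀ᵐ x ∂dualRuelleIter W A φ k n μ, x ∈ Sig W A k := by
  cases n with
  | zero => exact h
  | succ n =>
    refine ae_branchMeasure (measurable_weight_cons hw k) measurable_cons (measurableSet_Sig W A k)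
      (.of_forall fun x a => ?_)
    contrapose!
    exact weight_of_notMem

lemma dualRuelleIter_univ
    (hnorm : ∀ k, ∀ x ∈ Sig W A (k + 1), ∑' a, weight W A φ k (cons a x) = 1)
    (h : ∀ᵐ x ∂μ, x ∈ Sig W A (k + n)) : dualRuelleIter W A φ k n μ .univ = μ .univ := by
  induction n generalizing k with
  | zero => rfl
  | succ n ih =>
    rw [Nat.add_comm n 1, ← Nat.add_assoc] at h
    rw [← ih h, dualRuelleIter, dualRuelle_eq_branchMeasure]
    exact branchMeasure_univ (measurable_weight_cons hw k) measurable_cons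
      ((ae_dualRuelleIter_mem_Sig hw h).mono (hnorm k))

lemma isFiniteMeasure_dualRuelleIter [IsFiniteMeasure μ]
    (hnorm : ∀ k, ∀ x ∈ Sig W A (k + 1), ∑' a, weight W A φ k (cons a x) = 1)
    (h : ∀ᵐ x ∂μ, x ∈ Sig W A (k + n)) : IsFiniteMeasure (dualRuelleIter W A φ k n μ) :=
  ⟨by rw [dualRuelleIter_univ hw hnorm h]; exact measure_lt_top μ _⟩

end Measurable

lemma dualRuelleIter_add (k n m : ℕ) (μ : Measure Seq) :
    dualRuelleIter W A φ k (n + m) μ =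
      dualRuelleIter W A φ k n (dualRuelleIter W A φ (k + n) m μ) := by
  induction n generalizing k with
  | zero => rw [Nat.zero_add]; rfl
  | succ n ih =>
    rw [Nat.add_right_comm, dualRuelleIter, ih, dualRuelleIter, Nat.add_right_comm k 1 n]
    rfl

lemma birkhoff_succ (φ : ℕ → Seq → ℝ) (k n : ℕ) (y : Seq) :
    birkhoff φ k (n + 1) y = φ k y + birkhoff φ (k + 1) n (shift y) := by
  rw [birkhoff, Finset.sum_range_succ', add_comm, birkhoff]
  simp only [Nat.add_right_comm k 1, Function.iterate_succ_apply]
  rfl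

lemma lintegral_le_lintegral_dualRuelleIter (hw : ∀ k, Measurable (weight W A φ k))
    {f g : Seq → ℝ≥0∞} (hf : Measurable f) (h : ∀ᵐ x ∂μ, ∃ y ∈ Sig W A k, shift^[n] y = x ∧
      g x ≤ .ofReal (exp (birkhoff φ k n y)) * f y) :
    ∫⁻ x, g x ∂μ ≤ ∫⁻ y, f y ∂dualRuelleIter W A φ k n μ := by
  induction n generalizing k f with
  | zero =>
    refine lintegral_mono_ae (h.mono ?_)
    rintro _ ⟨y, -, rfl, hy⟩
    simpa [birkhoff] using hy
  | succ n ih =>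
    have h_meas (a : ℕ) : Measurable fun x => weight W A φ k (cons a x) * f (cons a x) :=
      (measurable_weight_cons hw k a).mul (hf.comp (measurable_cons a))
    rw [dualRuelleIter, dualRuelle_eq_branchMeasure,
      lintegral_branchMeasure (measurable_weight_cons hw k) measurable_cons hf]
    refine ih (.tsum h_meas) (h.mono ?_)
    rintro _ ⟨y, hy, rfl, hgy⟩
    refine ⟨shift y, shift_mem_Sig hy, rfl, hgy.trans ?_⟩
    rw [birkhoff_succ, add_comm, exp_add, ENNReal.ofReal_mul (exp_pos _).le, mul_assoc,
      ← weight_of_mem hy]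
    gcongr
    simpa only [cons_head_shift] using
      ENNReal.le_tsum (f := fun a => weight W A φ k (cons a (shift y)) * f (cons a (shift y))) (y 0)

lemma ofReal_mul_measure_univ_le_dualRuelleIter_apply (hw : ∀ k, Measurable (weight W A φ k))
    {s : Set Seq} (hs : MeasurableSet s) {C : ℝ} (h : ∀ᵐ x ∂μ, ∃ y ∈ Sig W A k,
      shift^[n] y = x ∧ y ∈ s ∧ C ≤ exp (birkhoff φ k n y)) :
    .ofReal C * μ .univ ≤ dualRuelleIter W A φ k n μ s := by
  rw [← lintegral_const, ← lintegral_indicator_one hs]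
  refine lintegral_le_lintegral_dualRuelleIter hw (measurable_one.indicator hs) (h.mono ?_)
  rintro _ ⟨y, hy, rfl, hys, hC⟩
  refine ⟨y, hy, rfl, ?_⟩
  rw [Set.indicator_of_mem hys, Pi.one_apply, mul_one]
  exact ENNReal.ofReal_le_ofReal hC

end DualRuelle

section BranchCoupling

variable {W : ℕ → Set ℕ} {A : ℕ → ℕ → ℕ → Prop} {φ : ℕ → Seq → ℝ} {κ : ℕ → ℝ} {r : ℝ}
  {k n : ℕ} {p : Seq × Seq} {M : Measure (Seq × Seq)} {μ ν : Measure Seq}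

lemma logB_succ (κ : ℕ → ℝ) (r : ℝ) (k : ℕ) : logB κ r (k + 1) = r * (κ k + logB κ r k) := by
  have h_shift (m : ℕ) (f : ℕ → ℝ) :
      ∑ i ∈ Finset.Icc 1 m, f i = ∑ i ∈ Finset.range m, f (i + 1) := by
    rw [Finset.range_eq_Ico, Finset.sum_Ico_add' f 0 m 1]
    rfl
  rw [logB, logB, h_shift, h_shift, Finset.sum_range_succ', mul_add, Finset.mul_sum, add_comm]
  congr 1
  · rw [Nat.zero_add, Nat.add_sub_cancel, pow_one, mul_comm]
  · refine Finset.sum_congr rfl fun i _ => ?_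
    rw [Nat.add_sub_add_right, pow_succ', mul_left_comm]

lemma logB_nonneg (hκ : ∀ n, 0 ≤ κ n) (hr : 0 ≤ r) (k : ℕ) : 0 ≤ logB κ r k :=
  Finset.sum_nonneg fun _ _ => mul_nonneg (hκ _) (pow_nonneg hr _)

lemma Bconst_pos (κ : ℕ → ℝ) (r : ℝ) (k : ℕ) : 0 < Bconst κ r k := exp_pos _

lemma one_le_Bconst (hκ : ∀ n, 0 ≤ κ n) (hr : 0 ≤ r) (k : ℕ) : 1 ≤ Bconst κ r k :=
  one_le_exp (logB_nonneg hκ hr k)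

/-- The lower bound `exp (-log B_k · d_r(x,y))` for the fraction of mass that branches started at
`x` and `y` still have in common when they reach level `0`. It equals `1` on the diagonal and is at
least `1 / B_k` everywhere. -/
noncomputable def distortion (κ : ℕ → ℝ) (r : ℝ) (k : ℕ) (p : Seq × Seq) : ℝ≥0∞ :=
  .ofReal (exp (-(logB κ r k * dr r p.1 p.2)))

lemma measurable_distortion (κ : ℕ → ℝ) (r : ℝ) (k : ℕ) : Measurable (distortion κ r k) :=
  ((measurable_dr r).const_mul _).neg.exp.ennreal_ofReal

lemma distortion_le_one (hκ : ∀ n, 0 ≤ κ n) (hr : 0 ≤ r) (k : ℕ) (p : Seq × Seq) :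
    distortion κ r k p ≤ 1 :=
  ENNReal.ofReal_le_one.2 (exp_le_one_iff.2
    (neg_nonpos.2 (mul_nonneg (logB_nonneg hκ hr k) (dr_nonneg hr _ _))))

lemma one_le_distortion_add (hκ : ∀ n, 0 ≤ κ n) (hr : 0 ≤ r) (k : ℕ) (p : Seq × Seq) :
    1 ≤ distortion κ r k p + .ofReal (logB κ r k) * .ofReal (dr r p.1 p.2) := by
  have hB := logB_nonneg hκ hr k
  rw [distortion, ← ENNReal.ofReal_mul hB, ← ENNReal.ofReal_add (exp_pos _).le
    (mul_nonneg hB (dr_nonneg hr _ _)), ENNReal.one_le_ofReal]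
  linarith [add_one_le_exp (-(logB κ r k * dr r p.1 p.2))]

lemma ofReal_inv_Bconst_le_distortion (hκ : ∀ n, 0 ≤ κ n) (hr : 0 ≤ r) (hr' : r ≤ 1) (k : ℕ)
    (p : Seq × Seq) : .ofReal (Bconst κ r k)⁻¹ ≤ distortion κ r k p := by
  rw [Bconst, ← exp_neg]
  exact ENNReal.ofReal_le_ofReal (exp_le_exp.2 (neg_le_neg
    (mul_le_of_le_one_right (logB_nonneg hκ hr k) (dr_le_one hr hr' _ _))))

/-- Pairs of points of `Σ_k` that lie in a common `1`-cylinder. -/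
def headPairs (W : ℕ → Set ℕ) (A : ℕ → ℕ → ℕ → Prop) (k : ℕ) : Set (Seq × Seq) :=
  {p | p.1 ∈ Sig W A k ∧ p.2 ∈ Sig W A k ∧ p.1 0 = p.2 0}

lemma measurableSet_headPairs (W : ℕ → Set ℕ) (A : ℕ → ℕ → ℕ → Prop) (k : ℕ) :
    MeasurableSet (headPairs W A k) :=
  (measurable_fst (measurableSet_Sig W A k)).inter ((measurable_snd (measurableSet_Sig W A k)).inter
    (measurableSet_eq_fun ((measurable_pi_apply 0).comp measurable_fst)
      ((measurable_pi_apply 0).comp measurable_snd)))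

/-- The weight with which the two points of `p` can be moved simultaneously along their inverse
branches with the letter `a`. -/
noncomputable def commonWeight (W : ℕ → Set ℕ) (A : ℕ → ℕ → ℕ → Prop) (φ : ℕ → Seq → ℝ) (k a : ℕ)
    (p : Seq × Seq) : ℝ≥0∞ :=
  min (weight W A φ k (cons a p.1)) (weight W A φ k (cons a p.2))

/-- The transport plan obtained from `M` by moving both points of a pair along the same inverse
branch: a subcoupling of `ℒ^*_k μ` and `ℒ^*_k ν` if `M` is a subcoupling of `μ` and `ν`. -/
noncomputable def branchCoupling (W : ℕ → Set ℕ) (A : ℕ → ℕ → ℕ → Prop) (φ : ℕ → Seq → ℝ) (k : ℕ)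
    (M : Measure (Seq × Seq)) : Measure (Seq × Seq) :=
  branchMeasure (commonWeight W A φ k) (fun a => Prod.map (cons a) (cons a)) M

/-- The iterated version of `branchCoupling`, parallel to `dualRuelleIter`. -/
noncomputable def branchCouplingIter (W : ℕ → Set ℕ) (A : ℕ → ℕ → ℕ → Prop) (φ : ℕ → Seq → ℝ) :
    (k : ℕ) → ℕ → Measure (Seq × Seq) → Measure (Seq × Seq)
  | _, 0, M => M
  | k, n + 1, M => branchCoupling W A φ k (branchCouplingIter W A φ (k + 1) n M)

lemma cons_mem_headPairs_of_commonWeight_ne_zero {a : ℕ} (h : commonWeight W A φ k a p ≠ 0) :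
    p.map (cons a) (cons a) ∈ headPairs W A k := by
  refine ⟨not_not.1 fun h_notMem => h ?_, not_not.1 fun h_notMem => h ?_, rfl⟩
  · exact nonpos_iff_eq_zero.1 ((min_le_left _ _).trans_eq (weight_of_notMem h_notMem))
  · exact nonpos_iff_eq_zero.1 ((min_le_right _ _).trans_eq (weight_of_notMem h_notMem))

lemma measurable_map_cons (a : ℕ) : Measurable (Prod.map (cons a) (cons a)) :=
  (measurable_cons a).prodMap (measurable_cons a)

lemma distortion_mul_weight_le (hr : 0 ≤ r) (hκ : ∀ n, 0 ≤ κ n)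
    (hφ : ∀ n, HolderOn (Sig W A n) r (κ n) 2 (φ n)) (hp : p ∈ headPairs W A (k + 1)) (a : ℕ) :
    weight W A φ k (cons a p.1) * distortion κ r (k + 1) p ≤
      commonWeight W A φ k a p * distortion κ r k (p.map (cons a) (cons a)) := by
  obtain ⟨-, h_snd, h_head⟩ := hp
  by_cases hx : cons a p.1 ∈ Sig W A k
  · have hy := cons_mem_Sig_of_head_eq hx h_snd h_head
    have h_agrees : agrees (cons a p.1) (cons a p.2) 2 :=
      agrees_cons fun i hi => by rwa [Nat.lt_one_iff.1 hi]
    have h_holder := (hφ k).abs_sub_le hx hy h_agrees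
    have h_nonneg := mul_nonneg (hκ k) (dr_nonneg hr (cons a p.1) (cons a p.2))
    rw [commonWeight, weight_of_mem hx, weight_of_mem hy,
      ← (ENNReal.ofReal_mono.map_min), ← exp_monotone.map_min, distortion, distortion,
      ← ENNReal.ofReal_mul (exp_pos _).le, ← ENNReal.ofReal_mul (exp_pos _).le, ← exp_add,
      ← exp_add]
    refine ENNReal.ofReal_le_ofReal (exp_le_exp.2 ?_)
    have h_exponent : logB κ r (k + 1) * dr r p.1 p.2 =
        κ k * dr r (cons a p.1) (cons a p.2) + logB κ r k * dr r (cons a p.1) (cons a p.2) := by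
      rw [logB_succ, dr_cons]
      ring
    have h_min : φ k (cons a p.1) - κ k * dr r (cons a p.1) (cons a p.2) ≤
        min (φ k (cons a p.1)) (φ k (cons a p.2)) :=
      le_min (sub_le_self _ h_nonneg) (sub_le_comm.1 (abs_le.1 h_holder).2)
    rw [h_exponent, Prod.map_fst, Prod.map_snd]
    linarith
  · rw [weight_of_notMem hx, zero_mul]
    exact zero_le

section Measurable

variable (hw : ∀ k, Measurable (weight W A φ k))
include hw

lemma measurable_commonWeight (k a : ℕ) : Measurable (commonWeight W A φ k a) :=
  ((measurable_weight_cons hw k a).comp measurable_fst).min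
    ((measurable_weight_cons hw k a).comp measurable_snd)

lemma IsSubcoupling.branchCoupling (h : IsSubcoupling M μ ν) (k : ℕ) :
    IsSubcoupling (branchCoupling W A φ k M) (dualRuelle W A φ k μ) (dualRuelle W A φ k ν) where
  fst_le := map_branchMeasure_le (measurable_commonWeight hw k) measurable_map_cons
    (measurable_weight_cons hw k) measurable_cons measurable_fst measurable_fst (fun _ _ => rfl)
    (fun _ _ => min_le_left _ _) h.fst_le
  snd_le := map_branchMeasure_le (measurable_commonWeight hw k) measurable_map_cons
    (measurable_weight_cons hw k) measurable_cons measurable_snd measurable_snd (fun _ _ => rfl)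
    (fun _ _ => min_le_right _ _) h.snd_le

lemma IsSubcoupling.branchCouplingIter (h : IsSubcoupling M μ ν) (k n : ℕ) :
    IsSubcoupling (branchCouplingIter W A φ k n M) (dualRuelleIter W A φ k n μ)
      (dualRuelleIter W A φ k n ν) := by
  induction n generalizing k with
  | zero => exact h
  | succ n ih => exact (ih (k + 1)).branchCoupling hw k

lemma ae_branchCouplingIter_mem_headPairs (h : ∀ᵐ p ∂M, p ∈ headPairs W A (k + n)) :
    ∀ᵐ p ∂branchCouplingIter W A φ k n M, p ∈ headPairs W A k := by
  cases n with
  | zero => exact h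
  | succ n =>
    exact ae_branchMeasure (measurable_commonWeight hw k) measurable_map_cons
      (measurableSet_headPairs W A k)
      (.of_forall fun _ _ => cons_mem_headPairs_of_commonWeight_ne_zero)

lemma ae_branchCouplingIter_dr_le (hr : 0 ≤ r) (hr' : r ≤ 1) (k n : ℕ) (M : Measure (Seq × Seq)) :
    ∀ᵐ p ∂branchCouplingIter W A φ k n M, dr r p.1 p.2 ≤ r ^ n := by
  induction n generalizing k with
  | zero => exact .of_forall fun p => (dr_le_one hr hr' _ _).trans_eq (pow_zero r).symm
  | succ n ih =>
    refine ae_branchMeasure (s := {p | dr r p.1 p.2 ≤ r ^ (n + 1)}) (measurable_commonWeight hw k)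
      measurable_map_cons (measurableSet_le (measurable_dr r) measurable_const) ?_
    refine (ih (k + 1)).mono fun p hp a _ => ?_
    rw [Set.mem_ofPred_eq, Prod.map_fst, Prod.map_snd, dr_cons, pow_succ']
    gcongr

lemma lintegral_dr_branchCouplingIter_le (hr : 0 ≤ r)
    (hnorm : ∀ k, ∀ x ∈ Sig W A (k + 1), ∑' a, weight W A φ k (cons a x) = 1)
    (h : ∀ᵐ p ∂M, p ∈ headPairs W A (k + n)) :
    ∫⁻ p, .ofReal (dr r p.1 p.2) ∂branchCouplingIter W A φ k n M ≤
      .ofReal r ^ n * ∫⁻ p, .ofReal (dr r p.1 p.2) ∂M := by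
  induction n generalizing k with
  | zero => rw [pow_zero, one_mul]; rfl
  | succ n ih =>
    rw [Nat.add_comm n 1, ← Nat.add_assoc] at h
    have h_dr : Measurable fun p : Seq × Seq => ENNReal.ofReal (dr r p.1 p.2) :=
      (measurable_dr r).ennreal_ofReal
    rw [pow_succ', mul_assoc]
    refine le_trans ?_ (mul_le_mul_right (ih h) _)
    rw [branchCouplingIter, branchCoupling,
      lintegral_branchMeasure (measurable_commonWeight hw k) measurable_map_cons h_dr,
      ← lintegral_const_mul _ h_dr]
    refine lintegral_mono_ae ((ae_branchCouplingIter_mem_headPairs hw h).mono fun p hp => ?_)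
    simp only [Prod.map_fst, Prod.map_snd, dr_cons, ENNReal.ofReal_mul hr, ENNReal.tsum_mul_right]
    refine mul_le_of_le_one_left zero_le ?_
    rw [← hnorm k p.1 hp.1]
    exact ENNReal.tsum_le_tsum fun a => min_le_left _ _

variable (hr : 0 ≤ r) (hκ : ∀ n, 0 ≤ κ n) (hφ : ∀ n, HolderOn (Sig W A n) r (κ n) 2 (φ n))
  (hnorm : ∀ k, ∀ x ∈ Sig W A (k + 1), ∑' a, weight W A φ k (cons a x) = 1)
include hr hκ hφ hnorm

lemma lintegral_distortion_le_branchCouplingIter (h : ∀ᵐ p ∂M, p ∈ headPairs W A (k + n)) :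
    ∫⁻ p, distortion κ r (k + n) p ∂M ≤
      ∫⁻ p, distortion κ r k p ∂branchCouplingIter W A φ k n M := by
  induction n generalizing k with
  | zero => rfl
  | succ n ih =>
    rw [Nat.add_comm n 1, ← Nat.add_assoc] at h ⊢
    refine (ih h).trans ?_
    rw [Nat.add_comm 1 n, branchCouplingIter, branchCoupling, lintegral_branchMeasure
      (measurable_commonWeight hw k) measurable_map_cons (measurable_distortion κ r k)]
    refine lintegral_mono_ae ((ae_branchCouplingIter_mem_headPairs hw h).mono fun p hp => ?_)
    rw [← one_mul (distortion κ r (k + 1) p), ← hnorm k p.1 hp.1, ← ENNReal.tsum_mul_right]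
    exact ENNReal.tsum_le_tsum (distortion_mul_weight_le hr hκ hφ hp)

lemma lintegral_distortion_le_branchCouplingIter_univ (h : ∀ᵐ p ∂M, p ∈ headPairs W A (k + n)) :
    ∫⁻ p, distortion κ r (k + n) p ∂M ≤ branchCouplingIter W A φ k n M .univ := by
  refine (lintegral_distortion_le_branchCouplingIter hw hr hκ hφ hnorm h).trans ?_
  rw [← lintegral_one]
  exact lintegral_mono (distortion_le_one hκ hr k)

lemma measure_univ_le_branchCouplingIter_add (h : ∀ᵐ p ∂M, p ∈ headPairs W A (k + n)) :
    M .univ ≤ branchCouplingIter W A φ k n M .univ +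
      .ofReal (logB κ r (k + n)) * ∫⁻ p, .ofReal (dr r p.1 p.2) ∂M := by
  refine le_trans ?_ (add_le_add_left
    (lintegral_distortion_le_branchCouplingIter_univ hw hr hκ hφ hnorm h) _)
  rw [← lintegral_const_mul _ (measurable_dr r).ennreal_ofReal,
    ← lintegral_add_left (measurable_distortion κ r (k + n)), ← lintegral_one]
  exact lintegral_mono (one_le_distortion_add hκ hr (k + n))

lemma ofReal_inv_Bconst_mul_le_branchCouplingIter (hr' : r ≤ 1)
    (h : ∀ᵐ p ∂M, p ∈ headPairs W A (k + n)) :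
    .ofReal (Bconst κ r (k + n))⁻¹ * M .univ ≤ branchCouplingIter W A φ k n M .univ := by
  refine le_trans ?_ (lintegral_distortion_le_branchCouplingIter_univ hw hr hκ hφ hnorm h)
  rw [← lintegral_const]
  exact lintegral_mono (ofReal_inv_Bconst_le_distortion hκ hr hr' (k + n))

end Measurable

end BranchCoupling

section Contraction

variable {W : ℕ → Set ℕ} {A : ℕ → ℕ → ℕ → Prop} {φ : ℕ → Seq → ℝ} {κ : ℕ → ℝ} {r α C : ℝ}
  {k m n o : ℕ} {x y : Seq} {M : Measure (Seq × Seq)} {μ ν : Measure Seq}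

/-- The truncated distance `min {1, α d_r(x,y)}`. The metric `d̄_k` is the case `α = α_k`. -/
noncomputable def truncDist (r α : ℝ) (x y : Seq) : ℝ := min 1 (α * dr r x y)

lemma truncDist_nonneg (hr : 0 ≤ r) (hα : 0 ≤ α) (x y : Seq) : 0 ≤ truncDist r α x y :=
  le_min zero_le_one (mul_nonneg hα (dr_nonneg hr x y))

lemma truncDist_le_one (r α : ℝ) (x y : Seq) : truncDist r α x y ≤ 1 := min_le_left _ _

lemma truncDist_eq_mul_dr (h : truncDist r α x y < 1) : truncDist r α x y = α * dr r x y :=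
  min_eq_right ((min_lt_iff.1 h).resolve_left (lt_irrefl 1)).le

lemma measurable_truncDist (r α : ℝ) :
    Measurable fun p : Seq × Seq => truncDist r α p.1 p.2 :=
  measurable_const.min ((measurable_dr r).const_mul α)

lemma ofReal_truncDist_le_mul_dr (hα : 0 ≤ α) (x y : Seq) :
    ENNReal.ofReal (truncDist r α x y) ≤ .ofReal α * .ofReal (dr r x y) := by
  rw [← ENNReal.ofReal_mul hα]
  exact ENNReal.ofReal_le_ofReal (min_le_right _ _)

lemma head_eq_of_truncDist_lt_one (hr : 0 ≤ r) (hα : 1 ≤ α) (h : truncDist r α x y < 1) :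
    x 0 = y 0 := by
  refine head_eq_of_dr_lt_one (r := r) (lt_of_le_of_lt ?_ h)
  rw [truncDist_eq_mul_dr h]
  exact le_mul_of_one_le_left (dr_nonneg hr x y) hα

/-- Pairs of points at `truncDist r α`-distance less than `1`. -/
def nearPairs (r α : ℝ) : Set (Seq × Seq) := {p | truncDist r α p.1 p.2 < 1}

lemma measurableSet_nearPairs (r α : ℝ) : MeasurableSet (nearPairs r α) :=
  measurableSet_lt (measurable_truncDist r α) measurable_const

lemma setLIntegral_nearPairs_truncDist (hα : 0 ≤ α) (M : Measure (Seq × Seq)) :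
    ∫⁻ p in nearPairs r α, .ofReal (truncDist r α p.1 p.2) ∂M =
      .ofReal α * ∫⁻ p in nearPairs r α, .ofReal (dr r p.1 p.2) ∂M := by
  rw [← lintegral_const_mul _ (measurable_dr r).ennreal_ofReal]
  refine setLIntegral_congr_fun (measurableSet_nearPairs r α) fun p hp => ?_
  simp only [truncDist_eq_mul_dr hp, ENNReal.ofReal_mul hα]

lemma setLIntegral_compl_nearPairs_truncDist (M : Measure (Seq × Seq)) :
    ∫⁻ p in (nearPairs r α)ᶜ, .ofReal (truncDist r α p.1 p.2) ∂M = M (nearPairs r α)ᶜ := by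
  rw [← setLIntegral_one]
  refine setLIntegral_congr_fun (measurableSet_nearPairs r α).compl fun p hp => ?_
  simp only [le_antisymm (truncDist_le_one r α p.1 p.2) (not_lt.1 hp), ENNReal.ofReal_one]

lemma ofReal_mul_add_tsub_le {a q : ℝ} {s t : ℝ≥0∞} (ha : 0 ≤ a) (ha' : a ≤ 1) (ht : t ≠ ∞)
    (hst : s ≤ t) (hq : .ofReal q * t ≤ s) :
    .ofReal a * s + (t - s) ≤ .ofReal (1 - (1 - a) * q) * t := by
  lift t to NNReal using ht
  lift s to NNReal using ne_top_of_le_ne_top ENNReal.coe_ne_top hst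
  simp only [← ENNReal.ofReal_coe_nnreal] at hq ⊢
  rw [← ENNReal.ofReal_mul' t.coe_nonneg, ENNReal.ofReal_le_ofReal_iff s.coe_nonneg] at hq
  have hst' : (s : ℝ) ≤ t := NNReal.coe_le_coe.2 (ENNReal.coe_le_coe.1 hst)
  rw [← ENNReal.ofReal_mul' s.coe_nonneg, ← ENNReal.ofReal_mul' t.coe_nonneg,
    ← ENNReal.ofReal_sub _ s.coe_nonneg, ← ENNReal.ofReal_add (by positivity) (sub_nonneg.2 hst')]
  refine ENNReal.ofReal_le_ofReal ?_
  linear_combination mul_le_mul_of_nonneg_left hq (sub_nonneg.2 ha')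

section Measurable

variable (hw : ∀ k, Measurable (weight W A φ k))
include hw

lemma exists_isSubcoupling_headPairs [IsFiniteMeasure μ] [IsFiniteMeasure ν]
    (hnorm : ∀ k, ∀ x ∈ Sig W A (k + 1), ∑' a, weight W A φ k (cons a x) = 1)
    (hC : ∀ x ∈ Sig W A (k + m), ∃ y ∈ Sig W A k,
      shift^[m] y = x ∧ y 0 = o ∧ C ≤ exp (birkhoff φ k m y))
    (hμ : ∀ᵐ x ∂μ, x ∈ Sig W A (k + m)) (hν : ∀ᵐ x ∂ν, x ∈ Sig W A (k + m))
    (hμν : μ .univ = ν .univ) :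
    ∃ N, IsSubcoupling N (dualRuelleIter W A φ k m μ) (dualRuelleIter W A φ k m ν) ∧
      (∀ᵐ p ∂N, p ∈ headPairs W A k) ∧ N .univ = .ofReal C * μ .univ := by
  set s : Set Seq := {x | x 0 = o}
  have hs : MeasurableSet s :=
    measurableSet_eq_fun (measurable_pi_apply 0) measurable_const
  have := isFiniteMeasure_dualRuelleIter hw hnorm hμ
  have := isFiniteMeasure_dualRuelleIter hw hnorm hν
  have h_mass_μ : .ofReal C * μ .univ ≤ (dualRuelleIter W A φ k m μ).restrict s .univ := by
    rw [Measure.restrict_apply_univ]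
    exact ofReal_mul_measure_univ_le_dualRuelleIter_apply hw hs (hμ.mono hC)
  have h_mass_ν : .ofReal C * μ .univ ≤ (dualRuelleIter W A φ k m ν).restrict s .univ := by
    rw [Measure.restrict_apply_univ, hμν]
    exact ofReal_mul_measure_univ_le_dualRuelleIter_apply hw hs (hν.mono hC)
  obtain ⟨N, hN, hN_univ⟩ := exists_isSubcoupling_measure_univ_eq h_mass_μ h_mass_ν
  refine ⟨N, hN.mono Measure.restrict_le_self Measure.restrict_le_self, ?_, hN_univ⟩
  filter_upwards [hN.ae_fst (ae_restrict_mem hs), hN.ae_snd (ae_restrict_mem hs),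
    hN.ae_fst (ae_restrict_of_ae (ae_dualRuelleIter_mem_Sig hw hμ)),
    hN.ae_snd (ae_restrict_of_ae (ae_dualRuelleIter_mem_Sig hw hν))] with p h_fst h_snd hp hp'
  exact ⟨hp, hp', Eq.trans h_fst (Eq.symm h_snd)⟩

lemma IsSubcoupling.exists_isCoupling_dualRuelleIter [IsFiniteMeasure μ] [IsFiniteMeasure ν]
    (hnorm : ∀ k, ∀ x ∈ Sig W A (k + 1), ∑' a, weight W A φ k (cons a x) = 1)
    (hM : IsSubcoupling M (dualRuelleIter W A φ k n μ) (dualRuelleIter W A φ k n ν))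
    (hμ : ∀ᵐ x ∂μ, x ∈ Sig W A (k + n)) (hν : ∀ᵐ x ∂ν, x ∈ Sig W A (k + n))
    (hμν : μ .univ = ν .univ) {f : Seq × Seq → ℝ≥0∞} (hf : ∀ p, f p ≤ 1) :
    ∃ Γ, IsCoupling Γ (dualRuelleIter W A φ k n μ) (dualRuelleIter W A φ k n ν) ∧
      ∫⁻ p, f p ∂Γ ≤ ∫⁻ p, f p ∂M + (μ .univ - M .univ) := by
  have := isFiniteMeasure_dualRuelleIter hw hnorm hμ
  have := isFiniteMeasure_dualRuelleIter hw hnorm hν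
  have h_mass := dualRuelleIter_univ hw hnorm hμ
  rw [← h_mass]
  refine hM.exists_isCoupling_lintegral_le ?_ hf
  rw [h_mass, hμν, dualRuelleIter_univ hw hnorm hν]

lemma lintegral_truncDist_branchCouplingIter_le (hr : 0 ≤ r)
    (hnorm : ∀ k, ∀ x ∈ Sig W A (k + 1), ∑' a, weight W A φ k (cons a x) = 1)
    (hα : 0 ≤ α) (h : ∀ᵐ p ∂M, p ∈ headPairs W A (k + n)) :
    ∫⁻ p, .ofReal (truncDist r α p.1 p.2) ∂branchCouplingIter W A φ k n M ≤
      .ofReal (r ^ n * α) * ∫⁻ p, .ofReal (dr r p.1 p.2) ∂M := by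
  set N := branchCouplingIter W A φ k n M
  calc ∫⁻ p, .ofReal (truncDist r α p.1 p.2) ∂N
      ≤ ∫⁻ p, .ofReal α * .ofReal (dr r p.1 p.2) ∂N :=
        lintegral_mono fun p => ofReal_truncDist_le_mul_dr hα _ _
    _ = .ofReal α * ∫⁻ p, .ofReal (dr r p.1 p.2) ∂N :=
        lintegral_const_mul _ (measurable_dr r).ennreal_ofReal
    _ ≤ .ofReal α * (.ofReal r ^ n * ∫⁻ p, .ofReal (dr r p.1 p.2) ∂M) := by
        gcongr
        exact lintegral_dr_branchCouplingIter_le hw hr hnorm h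
    _ = .ofReal (r ^ n * α) * ∫⁻ p, .ofReal (dr r p.1 p.2) ∂M := by
        rw [ENNReal.ofReal_mul (pow_nonneg hr n), ENNReal.ofReal_pow hr, ← mul_assoc,
          mul_comm (ENNReal.ofReal α)]

lemma lintegral_truncDist_branchCouplingIter_le_measure_univ (hr : 0 ≤ r) (hr' : r ≤ 1)
    (hα : 0 ≤ α) (k n : ℕ) (M : Measure (Seq × Seq)) :
    ∫⁻ p, .ofReal (truncDist r α p.1 p.2) ∂branchCouplingIter W A φ k n M ≤
      .ofReal (r ^ n * α) * branchCouplingIter W A φ k n M .univ := by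
  rw [← lintegral_const]
  refine lintegral_mono_ae ((ae_branchCouplingIter_dr_le hw hr hr' k n M).mono fun p hp => ?_)
  refine ENNReal.ofReal_le_ofReal ((min_le_right _ _).trans ?_)
  rw [mul_comm]
  gcongr

variable (hr : 0 ≤ r) (hκ : ∀ n, 0 ≤ κ n) (hφ : ∀ n, HolderOn (Sig W A n) r (κ n) 2 (φ n))
  (hnorm : ∀ k, ∀ x ∈ Sig W A (k + 1), ∑' a, weight W A φ k (cons a x) = 1)
  (hα : 0 ≤ α) (hα' : r ^ n * α ≤ 1)
include hr hκ hφ hnorm hα hα'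

lemma exists_isCoupling_lintegral_le_of_headPairs [IsFiniteMeasure M]
    (h : ∀ᵐ p ∂M, p ∈ headPairs W A (k + n)) :
    ∃ Γ, IsCoupling Γ (dualRuelleIter W A φ k n M.fst) (dualRuelleIter W A φ k n M.snd) ∧
      ∫⁻ p, .ofReal (truncDist r α p.1 p.2) ∂Γ ≤
        .ofReal (Bconst κ r (k + n)) * ∫⁻ p, .ofReal (dr r p.1 p.2) ∂M := by
  have h_fst : ∀ᵐ x ∂M.fst, x ∈ Sig W A (k + n) :=
    (ae_map_iff measurable_fst.aemeasurable (measurableSet_Sig W A _)).2 (h.mono fun _ hp => hp.1)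
  have h_snd : ∀ᵐ x ∂M.snd, x ∈ Sig W A (k + n) :=
    (ae_map_iff measurable_snd.aemeasurable (measurableSet_Sig W A _)).2 (h.mono fun _ hp => hp.2.1)
  set N := branchCouplingIter W A φ k n M
  have hN : IsSubcoupling N (dualRuelleIter W A φ k n M.fst) (dualRuelleIter W A φ k n M.snd) :=
    IsSubcoupling.branchCouplingIter hw ⟨le_rfl, le_rfl⟩ k n
  obtain ⟨Γ, hΓ, h_cost⟩ := hN.exists_isCoupling_dualRuelleIter hw hnorm h_fst h_snd
    (Measure.fst_univ.trans Measure.snd_univ.symm)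
    fun p => ENNReal.ofReal_le_one.2 (truncDist_le_one r α p.1 p.2)
  refine ⟨Γ, hΓ, h_cost.trans ?_⟩
  rw [Measure.fst_univ]
  set D := ∫⁻ p, .ofReal (dr r p.1 p.2) ∂M
  have h_moved : ∫⁻ p, .ofReal (truncDist r α p.1 p.2) ∂N ≤ D :=
    (lintegral_truncDist_branchCouplingIter_le hw hr hnorm hα h).trans
      (mul_le_of_le_one_left zero_le (ENNReal.ofReal_le_one.2 hα'))
  have h_lost : M .univ - N .univ ≤ .ofReal (logB κ r (k + n)) * D :=
    tsub_le_iff_left.2 (measure_univ_le_branchCouplingIter_add hw hr hκ hφ hnorm h)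
  calc ∫⁻ p, .ofReal (truncDist r α p.1 p.2) ∂N + (M .univ - N .univ)
      ≤ D + .ofReal (logB κ r (k + n)) * D := add_le_add h_moved h_lost
    _ = .ofReal (logB κ r (k + n) + 1) * D := by
        rw [ENNReal.ofReal_add (logB_nonneg hκ hr _) zero_le_one, ENNReal.ofReal_one, add_mul,
          one_mul, add_comm]
    _ ≤ .ofReal (Bconst κ r (k + n)) * D := by
        gcongr
        exact add_one_le_exp _

variable (hr' : r ≤ 1) (hC : ∀ x ∈ Sig W A (k + n + m), ∃ y ∈ Sig W A (k + n),
  shift^[m] y = x ∧ y 0 = o ∧ C ≤ exp (birkhoff φ (k + n) m y))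
include hr' hC

lemma exists_isCoupling_lintegral_le_measure_univ [IsFiniteMeasure μ] [IsFiniteMeasure ν]
    (hμ : ∀ᵐ x ∂μ, x ∈ Sig W A (k + (n + m))) (hν : ∀ᵐ x ∂ν, x ∈ Sig W A (k + (n + m)))
    (hμν : μ .univ = ν .univ) :
    ∃ Γ, IsCoupling Γ (dualRuelleIter W A φ k (n + m) μ) (dualRuelleIter W A φ k (n + m) ν) ∧
      ∫⁻ p, .ofReal (truncDist r α p.1 p.2) ∂Γ ≤
        .ofReal (1 - (1 - r ^ n * α) * C / Bconst κ r (k + n)) * μ .univ := by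
  obtain ⟨N, hN, hN_head, hN_univ⟩ := exists_isSubcoupling_headPairs hw hnorm hC
    (by rwa [add_assoc]) (by rwa [add_assoc]) hμν
  set P := branchCouplingIter W A φ k n N
  have hP : IsSubcoupling P (dualRuelleIter W A φ k (n + m) μ)
      (dualRuelleIter W A φ k (n + m) ν) := by
    rw [dualRuelleIter_add, dualRuelleIter_add]
    exact hN.branchCouplingIter hw k n
  obtain ⟨Γ, hΓ, h_cost⟩ := hP.exists_isCoupling_dualRuelleIter hw hnorm hμ hν hμν
    fun p => ENNReal.ofReal_le_one.2 (truncDist_le_one r α p.1 p.2)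
  have hP_le : P .univ ≤ μ .univ :=
    hP.measure_univ_le.trans_eq (dualRuelleIter_univ hw hnorm hμ)
  have h_mass : .ofReal (C / Bconst κ r (k + n)) * μ .univ ≤ P .univ := by
    rw [div_eq_inv_mul, ENNReal.ofReal_mul (inv_nonneg.2 (Bconst_pos κ r _).le), mul_assoc,
      ← hN_univ]
    exact ofReal_inv_Bconst_mul_le_branchCouplingIter hw hr hκ hφ hnorm hr' hN_head
  refine ⟨Γ, hΓ, h_cost.trans ((add_le_add_left
    (lintegral_truncDist_branchCouplingIter_le_measure_univ hw hr hr' hα k n N) _).trans ?_)⟩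
  rw [mul_div_assoc]
  exact ofReal_mul_add_tsub_le (mul_nonneg (pow_nonneg hr n) hα) hα' (measure_ne_top μ _) hP_le
    h_mass

lemma exists_isCoupling_lintegral_le_mul [IsFiniteMeasure M] {β : ℝ} (hβ : 0 < β) (hβ' : β ≤ 1)
    (h_fst : ∀ᵐ p ∂M, p.1 ∈ Sig W A (k + (n + m)))
    (h_snd : ∀ᵐ p ∂M, p.2 ∈ Sig W A (k + (n + m))) :
    ∃ Γ, IsCoupling Γ (dualRuelleIter W A φ k (n + m) M.fst)
        (dualRuelleIter W A φ k (n + m) M.snd) ∧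
      ∫⁻ p, .ofReal (truncDist r α p.1 p.2) ∂Γ ≤
        .ofReal (max β (1 - (1 - r ^ n * α) * C / Bconst κ r (k + n))) *
          ∫⁻ p, .ofReal (truncDist r (Bconst κ r (k + (n + m)) / β) p.1 p.2) ∂M := by
  set B := Bconst κ r (k + (n + m))
  have hB : 1 ≤ B / β :=
    (one_le_div hβ).2 (hβ'.trans (one_le_Bconst hκ hr _))
  set E := nearPairs r (B / β)
  have hE : MeasurableSet E := measurableSet_nearPairs r (B / β)
  have h_near : ∀ᵐ p ∂M.restrict E, p ∈ headPairs W A (k + (n + m)) := by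
    filter_upwards [ae_restrict_mem hE, ae_restrict_of_ae h_fst, ae_restrict_of_ae h_snd]
      with p hp hp_fst hp_snd
    exact ⟨hp_fst, hp_snd, head_eq_of_truncDist_lt_one hr hB hp⟩
  have hα'' : r ^ (n + m) * α ≤ 1 :=
    (mul_le_mul_of_nonneg_right (pow_le_pow_of_le_one hr hr' (n.le_add_right m)) hα).trans hα'
  obtain ⟨Γ₁, hΓ₁, h_cost₁⟩ :=
    exists_isCoupling_lintegral_le_of_headPairs hw hr hκ hφ hnorm hα hα'' h_near
  obtain ⟨Γ₂, hΓ₂, h_cost₂⟩ := exists_isCoupling_lintegral_le_measure_univ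
    (μ := (M.restrict Eᶜ).fst) (ν := (M.restrict Eᶜ).snd) hw hr hκ hφ hnorm hα hα' hr' hC
    ((ae_map_iff measurable_fst.aemeasurable (measurableSet_Sig W A _)).2
      (ae_restrict_of_ae h_fst))
    ((ae_map_iff measurable_snd.aemeasurable (measurableSet_Sig W A _)).2
      (ae_restrict_of_ae h_snd)) (Measure.fst_univ.trans Measure.snd_univ.symm)
  refine ⟨Γ₁ + Γ₂, ?_, ?_⟩
  · have h_add := hΓ₁.add hΓ₂
    rwa [← dualRuelleIter_add_measure hw, ← dualRuelleIter_add_measure hw, ← Measure.fst_add,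
      ← Measure.snd_add, Measure.restrict_add_restrict_compl hE] at h_add
  · have h_coeff : ENNReal.ofReal B = .ofReal β * .ofReal (B / β) := by
      rw [← ENNReal.ofReal_mul hβ.le, mul_div_cancel₀ _ hβ.ne']
    rw [Measure.fst_univ, Measure.restrict_apply_univ] at h_cost₂
    rw [h_coeff, mul_assoc, ← setLIntegral_nearPairs_truncDist (zero_le_one.trans hB)] at h_cost₁
    rw [lintegral_add_measure, ← lintegral_add_compl (μ := M) _ hE, mul_add,
      setLIntegral_compl_nearPairs_truncDist]
    refine add_le_add (h_cost₁.trans ?_) (h_cost₂.trans ?_)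
    · gcongr
      exact le_max_left _ _
    · gcongr
      exact le_max_right _ _

end Measurable

theorem dual_ruelle_wasserstein_contraction_general (hr : 0 < r) (hr' : r < 1) {β : ℝ}
    (hβ : 0 < β) (hβ' : β < 1) (hκ : ∀ n, 0 ≤ κ n)
    (hφ : ∀ n, HolderOn (Sig W A n) r (κ n) 2 (φ n))
    (hnorm : ∀ k, ∀ x ∈ Sig W A (k + 1), Ruelle W A φ k (fun _ => 1) x = 1)
    (hn : r ^ n * (Bconst κ r k / β) < 1) (hC_pos : 0 < C)
    (hC : ∀ x ∈ Sig W A (k + n + m), ∃ y ∈ Sig W A (k + n),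
      shift^[m] y = x ∧ y 0 = o ∧ C ≤ exp (birkhoff φ (k + n) m y))
    [IsProbabilityMeasure μ] [IsProbabilityMeasure ν]
    (hμ : μ (Sig W A (k + (n + m))) = 1) (hν : ν (Sig W A (k + (n + m))) = 1) :
    let t := max β (1 - (1 - r ^ n * (Bconst κ r k / β)) * C / Bconst κ r (k + n))
    0 < t ∧ t < 1 ∧
      Wass (truncDist r (Bconst κ r k / β)) (dualRuelleIter W A φ k (n + m) μ)
          (dualRuelleIter W A φ k (n + m) ν) ≤
        t * Wass (truncDist r (Bconst κ r (k + (n + m)) / β)) μ ν := by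
  intro t
  have ht : 0 < t := lt_max_of_lt_left hβ
  have ht' : t < 1 :=
    max_lt hβ' (sub_lt_self _ (div_pos (mul_pos (sub_pos.2 hn) hC_pos) (Bconst_pos κ r _)))
  have h_nonneg (j : ℕ) : 0 ≤ Bconst κ r j / β := (div_pos (Bconst_pos κ r j) hβ).le
  have hw (j : ℕ) : Measurable (weight W A φ j) :=
    measurable_weight ((hφ j).continuousOn hr.le hr')
  refine ⟨ht, ht', Wass_le_mul_Wass ht (measurable_truncDist r _)
    (truncDist_nonneg hr.le (h_nonneg _)) (truncDist_le_one r _) (measurable_truncDist r _)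
    (truncDist_nonneg hr.le (h_nonneg _)) fun M hM => ?_⟩
  have := hM.isProbabilityMeasure
  have h_fst := hM.isSubcoupling.ae_fst ((mem_ae_iff_prob_eq_one (measurableSet_Sig W A _)).2 hμ)
  have h_snd := hM.isSubcoupling.ae_snd ((mem_ae_iff_prob_eq_one (measurableSet_Sig W A _)).2 hν)
  obtain ⟨rfl, rfl⟩ := hM
  exact exists_isCoupling_lintegral_le_mul hw hr.le hκ hφ
    (fun j x hx => tsum_weight_cons (hnorm j x hx)) (h_nonneg k) hn.le hr'.le hC hβ hβ'.le
    h_fst h_snd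

end Contraction

namespace HstarSystem

variable (S : HstarSystem)

lemma holderOn_two (n : ℕ) : HolderOn (Sig S.W S.A n) S.r (S.κ n) 2 (S.φ n) := by
  by_cases hn : n ∈ S.K
  · exact (S.holder1 n hn).mono_index one_le_two
  · exact S.holder2 n hn

lemma pow_nseq_mul_alphaC_lt_one (k : ℕ) : S.r ^ S.nseq k * S.alphaC k < 1 := by
  have hα : 0 < S.alphaC k := div_pos (Bconst_pos S.κ S.r k) S.hβ.1
  have hr : 0 < S.r ^ S.nseq k := pow_pos S.hr.1 _
  have hn : -log (S.alphaC k) / log S.r < S.nseq k :=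
    (Int.lt_floor_add_one _).trans_le (by exact_mod_cast S.hn k)
  rw [div_lt_iff_of_neg (log_neg S.hr.1 S.hr.2)] at hn
  rw [← log_neg_iff (mul_pos hr hα), log_mul hr.ne' hα.ne', log_pow]
  linarith

lemma exists_mem_Sig_of_mem_Sig_add_mseq (k : ℕ) {x : Seq}
    (hx : x ∈ Sig S.W S.A (k + S.mseq k)) :
    ∃ y ∈ Sig S.W S.A k, shift^[S.mseq k] y = x ∧ y 0 = S.o k ∧
      S.Cseq k ≤ exp (birkhoff S.φ k (S.mseq k) y) := by
  obtain ⟨h_mem, h_head, -⟩ := S.hu k x hx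
  refine ⟨_, h_mem, shift_iterate_prepend _ _ _, ?_, S.hC_le k x hx⟩
  rw [prepend, if_pos (Nat.lt_of_succ_le (S.hm_mem k).1), h_head]

end HstarSystem

/-- (Lemma, part (iv).) Under property `(H*)`, with `l_k = n_k + m_{k+n_k}`,
the dual Ruelle operator over `l_k` steps contracts the Vasershtein distance with respect to
the metrics `d̄` by `t_k = max{β, 1 − (1 − r^{n_k} α_k) C_{k+n_k}/B_{k+n_k}} ∈ (0,1)`. -/
theorem dual_ruelle_wasserstein_contraction (S : HstarSystem) (k : ℕ)
    (μ ν : Measure Seq)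
    (hμp : IsProbabilityMeasure μ) (hμs : μ (Sig S.W S.A (k + S.lconst k)) = 1)
    (hνp : IsProbabilityMeasure ν) (hνs : ν (Sig S.W S.A (k + S.lconst k)) = 1) :
    0 < S.tconst k ∧ S.tconst k < 1 ∧
      Wass (S.dbar k) (dualRuelleIter S.W S.A S.φ k (S.lconst k) μ)
          (dualRuelleIter S.W S.A S.φ k (S.lconst k) ν) ≤
        S.tconst k * Wass (S.dbar (k + S.lconst k)) μ ν :=
  dual_ruelle_wasserstein_contraction_general S.hr.1 S.hr.2 S.hβ.1 S.hβ.2 S.κnonneg S.holderOn_two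
    S.normalized (S.pow_nseq_mul_alphaC_lt_one k) (S.hC_pos (k + S.nseq k))
    (fun _ => S.exists_mem_Sig_of_mem_Sig_add_mseq (k + S.nseq k)) hμs hνs

end NSShift
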